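/- Let A be an additive category, B an additive category with countable coproducts, and F : A ⥤ C(B) an additive functor. Then the extended functor F^C : C(A) ⥤ C(B) descends to the homotopy categories: there exists a functor F^K : K(A) ⥤ K(B) such that F^K ∘ Q_A = Q_B ∘ F^C, where Q_A : C(A) → K(A) and Q_B : C(B) → K(B) are the quotient functors onto the homotopy categories; moreover F^K is a triangulated (triangle-exact) functor with respect to the standard triangulated structures on K(A) and K(B). -/

import Mathlib

/-!
The extended functor `F^C` is computed on the summands `F(M^p)^q` of the total complex. A homotopy
`s` from `f` to `g` induces the homotopy `F(s)` (`ExtC.mapHomotopy`), so `F^C` followed by the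
quotient functor factors through `K(A)`; this gives `F^K` (`ExtC.extK`). Reindexing the summands
gives isomorphisms `F^C(M⟦x⟧) ≅ F^C(M)⟦x⟧` without signs (`ExtC.shiftIso`), hence a shift
compatibility on `F^C`, which is inherited by `F^K`.

For exactness, every distinguished triangle of a homotopy category is isomorphic to the one attached
to a degreewise split short exact sequence with section `s` and retraction `r`, whose connecting
morphism is `s ≫ d ≫ r`. Applying `F^C` produces again a degreewise split sequence
(`ExtC.splitting`), and its connecting morphism is the image of the original one
(`ExtC.map_homOfDegreewiseSplit`): the vertical part of the total differential contributes only
`F(s) ≫ F(r) = 0`.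
-/

open CategoryTheory CategoryTheory.Limits

section ExtensionOfFunctors

variable {A : Type*} [Category A] [Preadditive A] [HasZeroObject A] [HasBinaryBiproducts A]
variable {B : Type*} [Category B] [Preadditive B] [HasZeroObject B]
  [HasCountableCoproducts B]

instance hasTotalUpInt (K : HomologicalComplex₂ B (ComplexShape.up ℤ) (ComplexShape.up ℤ)) :
    K.HasTotal (ComplexShape.up ℤ) :=
  fun _ => inferInstance

instance : HasBinaryBiproducts B := HasBinaryBiproducts.of_hasBinaryCoproducts

/-- Given an additive functor `F : A ⥤ C(B)`, the associated double complex functor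
`F^{DC} : C(A) ⥤ DC(B)`: the `i`-th column of `F^{DC}(M)` is the complex `F(M^i)` and its
horizontal differentials are the chain maps `F(d_M^i)`. -/
noncomputable def extDC (F : A ⥤ CochainComplex B ℤ) [F.Additive] :
    CochainComplex A ℤ ⥤
      HomologicalComplex₂ B (ComplexShape.up ℤ) (ComplexShape.up ℤ) :=
  F.mapHomologicalComplex (ComplexShape.up ℤ)

/-- The extended functor `F^C : C(A) ⥤ C(B)` of an additive functor `F : A ⥤ C(B)`,
obtained by totalizing the double complex `F^{DC}(M)` with the standard sign convention,
so that `F^C(M)^n = ⊕_{i} F(M^i)^{n−i}`. -/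
noncomputable def extC (F : A ⥤ CochainComplex B ℤ) [F.Additive] :
    CochainComplex A ℤ ⥤ CochainComplex B ℤ :=
  extDC F ⋙
    HomologicalComplex₂.totalFunctor B (ComplexShape.up ℤ) (ComplexShape.up ℤ)
      (ComplexShape.up ℤ)

namespace ExtC

set_option linter.unusedSectionVars false

open CategoryTheory.Category

variable (F : A ⥤ CochainComplex B ℤ) [F.Additive]

/-! ### Summands of the total complex -/

/-- The inclusion of the summand `F(M^p)^q` in `F^C(M)^n`, for `p + q = n`. -/
noncomputable def ι (M : CochainComplex A ℤ) (p q n : ℤ) (h : p + q = n) :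
    (F.obj (M.X p)).X q ⟶ ((extC F).obj M).X n :=
  ((extDC F).obj M).ιTotal (ComplexShape.up ℤ) p q n h

/-- The morphism out of `F^C(M)^n` given by its restrictions to the summands. -/
noncomputable def desc {M : CochainComplex A ℤ} {n : ℤ} {Z : B}
    (φ : ∀ (p q : ℤ) (_ : p + q = n), (F.obj (M.X p)).X q ⟶ Z) :
    ((extC F).obj M).X n ⟶ Z :=
  ((extDC F).obj M).totalDesc φ

lemma ι_desc {M : CochainComplex A ℤ} {n : ℤ} {Z : B}
    (φ : ∀ (p q : ℤ) (_ : p + q = n), (F.obj (M.X p)).X q ⟶ Z) (p q : ℤ) (h : p + q = n) :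
    ι F M p q n h ≫ desc F φ = φ p q h :=
  HomologicalComplex₂.ι_totalDesc ((extDC F).obj M) (c₁₂ := ComplexShape.up ℤ) (i₁₂ := n) φ p q h

lemma ι_desc_assoc {M : CochainComplex A ℤ} {n : ℤ} {Z : B}
    (φ : ∀ (p q : ℤ) (_ : p + q = n), (F.obj (M.X p)).X q ⟶ Z) (p q : ℤ) (h : p + q = n)
    {W : B} (k : Z ⟶ W) : ι F M p q n h ≫ desc F φ ≫ k = φ p q h ≫ k := by
  rw [← assoc, ι_desc]

lemma hom_ext {M : CochainComplex A ℤ} {n : ℤ} {Z : B} {f g : ((extC F).obj M).X n ⟶ Z}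
    (h : ∀ (p q : ℤ) (hpq : p + q = n), ι F M p q n hpq ≫ f = ι F M p q n hpq ≫ g) : f = g :=
  HomologicalComplex₂.total.hom_ext (ComplexShape.up ℤ) h

lemma ι_map {M N : CochainComplex A ℤ} (f : M ⟶ N) (p q n : ℤ) (h : p + q = n) :
    ι F M p q n h ≫ ((extC F).map f).f n = (F.map (f.f p)).f q ≫ ι F N p q n h :=
  HomologicalComplex₂.ιTotal_map _ _ ((extDC F).map f) (ComplexShape.up ℤ) p q n h

lemma ι_map_assoc {M N : CochainComplex A ℤ} (f : M ⟶ N) (p q n : ℤ) (h : p + q = n)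
    {Z : B} (k : ((extC F).obj N).X n ⟶ Z) :
    ι F M p q n h ≫ ((extC F).map f).f n ≫ k = (F.map (f.f p)).f q ≫ ι F N p q n h ≫ k := by
  rw [← assoc, ι_map, assoc]

/-- The differential of `F^C(M)` on a summand: the horizontal part carries no sign, the vertical
part carries the sign `(-1)^p`. -/
lemma ι_d (M : CochainComplex A ℤ) (p q n p' q' n' : ℤ) (h : p + q = n) (hp : p + 1 = p')
    (hq : q + 1 = q') (hn : n + 1 = n') :
    ι F M p q n h ≫ ((extC F).obj M).d n n' =
      (F.map (M.d p p')).f q ≫ ι F M p' q n' (by lia) +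
        p.negOnePow • ((F.obj (M.X p)).d q q' ≫ ι F M p q' n' (by lia)) := by
  let K := (extDC F).obj M
  have e₁ : K.ιTotal (ComplexShape.up ℤ) p q n h ≫ K.D₁ (ComplexShape.up ℤ) n n' =
      (K.d p p').f q ≫ K.ιTotal (ComplexShape.up ℤ) p' q n' (by dsimp; lia) := by
    rw [K.ι_D₁, K.d₁_eq (ComplexShape.up ℤ) hp q n' (by dsimp; lia)]
    exact one_smul _ _
  have e₂ : K.ιTotal (ComplexShape.up ℤ) p q n h ≫ K.D₂ (ComplexShape.up ℤ) n n' =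
      p.negOnePow • ((K.X p).d q q' ≫ K.ιTotal (ComplexShape.up ℤ) p q' n' (by dsimp; lia)) := by
    rw [K.ι_D₂, K.d₂_eq (ComplexShape.up ℤ) p hq n' (by dsimp; lia)]
    rfl
  exact (Preadditive.comp_add _ _ _ _ _ _).trans (congrArg₂ (· + ·) e₁ e₂)

lemma ι_d_assoc (M : CochainComplex A ℤ) (p q n p' q' n' : ℤ) (h : p + q = n) (hp : p + 1 = p')
    (hq : q + 1 = q') (hn : n + 1 = n') {Z : B} (k : ((extC F).obj M).X n' ⟶ Z) :
    ι F M p q n h ≫ ((extC F).obj M).d n n' ≫ k =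
      ((F.map (M.d p p')).f q ≫ ι F M p' q n' (by lia) +
        p.negOnePow • ((F.obj (M.X p)).d q q' ≫ ι F M p q' n' (by lia))) ≫ k := by
  rw [← assoc, ι_d F M p q n p' q' n' h hp hq hn]

/-! ### Graded maps of total complexes -/

/-- The degree `n` component of the map `F^C(M) ⟶ F^C(N)` induced by a family of morphisms
`M^p ⟶ N^p` that need not commute with the differentials. -/
noncomputable def gr {M N : CochainComplex A ℤ} (s : ∀ p, M.X p ⟶ N.X p) (n : ℤ) :
    ((extC F).obj M).X n ⟶ ((extC F).obj N).X n :=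
  desc F (fun p q h => (F.map (s p)).f q ≫ ι F N p q n h)

lemma ι_gr {M N : CochainComplex A ℤ} (s : ∀ p, M.X p ⟶ N.X p) (p q n : ℤ) (h : p + q = n) :
    ι F M p q n h ≫ gr F s n = (F.map (s p)).f q ≫ ι F N p q n h := by
  simp [gr, ι_desc]

lemma ι_gr_assoc {M N : CochainComplex A ℤ} (s : ∀ p, M.X p ⟶ N.X p) (p q n : ℤ)
    (h : p + q = n) {Z : B} (k : ((extC F).obj N).X n ⟶ Z) :
    ι F M p q n h ≫ gr F s n ≫ k = (F.map (s p)).f q ≫ ι F N p q n h ≫ k := by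
  rw [← assoc, ι_gr, assoc]

lemma map_f_eq_gr {M N : CochainComplex A ℤ} (f : M ⟶ N) (n : ℤ) :
    ((extC F).map f).f n = gr F f.f n :=
  hom_ext F (fun p q h => by rw [ι_map, ι_gr])

lemma gr_comp {M N P : CochainComplex A ℤ} (s : ∀ p, M.X p ⟶ N.X p) (t : ∀ p, N.X p ⟶ P.X p)
    (n : ℤ) : gr F s n ≫ gr F t n = gr F (fun p => s p ≫ t p) n :=
  hom_ext F (fun p q h => by simp [ι_gr_assoc, ι_gr])

lemma gr_add {M N : CochainComplex A ℤ} (s t : ∀ p, M.X p ⟶ N.X p) (n : ℤ) :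
    gr F s n + gr F t n = gr F (fun p => s p + t p) n :=
  hom_ext F (fun p q h => by simp [ι_gr, F.map_add])

lemma gr_id (M : CochainComplex A ℤ) (n : ℤ) :
    gr F (fun p => 𝟙 (M.X p)) n = 𝟙 _ :=
  hom_ext F (fun p q h => by simp [ι_gr])

/-! ### Homotopies -/

/-- The map `F^C(M)^n ⟶ F^C(N)^{n-1}` given by `F(s)` on each summand, for a family
`s : M^p ⟶ N^{p-1}`; it is `0` unless `n' + 1 = n`. -/
noncomputable def homotopyHom {M N : CochainComplex A ℤ} (s : ∀ p p', M.X p ⟶ N.X p') (n n' : ℤ) :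
    ((extC F).obj M).X n ⟶ ((extC F).obj N).X n' :=
  if hn : n' + 1 = n then
    desc F (fun p q h => (F.map (s p (p - 1))).f q ≫ ι F N (p - 1) q n' (by lia))
  else 0

lemma ι_homotopyHom {M N : CochainComplex A ℤ} (s : ∀ p p', M.X p ⟶ N.X p') (p p' q n n' : ℤ)
    (h : p + q = n) (hp : p' + 1 = p) (hn : n' + 1 = n) :
    ι F M p q n h ≫ homotopyHom F s n n' = (F.map (s p p')).f q ≫ ι F N p' q n' (by lia) := by
  obtain rfl : p' = p - 1 := by lia
  rw [homotopyHom, dif_pos hn, ι_desc]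

lemma ι_homotopyHom_assoc {M N : CochainComplex A ℤ} (s : ∀ p p', M.X p ⟶ N.X p')
    (p p' q n n' : ℤ) (h : p + q = n) (hp : p' + 1 = p) (hn : n' + 1 = n) {Z : B}
    (k : ((extC F).obj N).X n' ⟶ Z) :
    ι F M p q n h ≫ homotopyHom F s n n' ≫ k =
      (F.map (s p p')).f q ≫ ι F N p' q n' (by lia) ≫ k := by
  rw [← assoc, ι_homotopyHom F s p p' q n n' h hp hn, assoc]

/-- `F^C` sends a homotopy to a homotopy. The vertical contributions cancel since `F(s)` is a chain
map and the signs `(-1)^p` and `(-1)^{p-1}` are opposite. -/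
noncomputable def mapHomotopy {M N : CochainComplex A ℤ} {f g : M ⟶ N} (H : Homotopy f g) :
    Homotopy ((extC F).map f) ((extC F).map g) where
  hom n n' := homotopyHom F (fun p p' => H.hom p p') n n'
  zero n n' h := dif_neg h
  comm n := by
    have hc := H.comm
    rw [dNext_eq _ (show (ComplexShape.up ℤ).Rel n (n + 1) from rfl),
      prevD_eq _ (show (ComplexShape.up ℤ).Rel (n - 1) n by simp)]
    apply hom_ext
    intro p q h
    have hcp := hc p
    rw [dNext_eq _ (show (ComplexShape.up ℤ).Rel p (p + 1) from rfl),
      prevD_eq _ (show (ComplexShape.up ℤ).Rel (p - 1) p by simp)] at hcp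
    rw [ι_map, hcp, Preadditive.comp_add, Preadditive.comp_add, ι_map,
      ι_d_assoc F M p q n (p + 1) (q + 1) (n + 1) h rfl rfl rfl,
      ι_homotopyHom_assoc F _ p (p - 1) q n (n - 1) h (by lia) (by lia),
      ι_d F N (p - 1) q (n - 1) p (q + 1) n (by lia) (by lia) (by lia) (by lia)]
    simp only [Preadditive.add_comp, Preadditive.comp_add, Linear.units_smul_comp,
      Linear.comp_units_smul, assoc]
    rw [ι_homotopyHom F _ (p + 1) p q (n + 1) n (by lia) (by lia) (by lia),
      ι_homotopyHom F _ p (p - 1) (q + 1) (n + 1) n (by lia) (by lia) (by lia)]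
    simp [Int.negOnePow_sub]
    abel

/-! ### Compatibility with shifts -/

section

variable {C : Type*} [Category C] [Preadditive C]

/-- The identification `(K⟦x⟧)^n ≅ K^{n'}` for `n + x = n'`. It is an identity up to transport;
making it explicit keeps all composites below type-correct without unfolding the shift. -/
def sX (K : CochainComplex C ℤ) (x n n' : ℤ) (h : n + x = n') : (K⟦x⟧).X n ≅ K.X n' :=
  K.XIsoOfEq h

lemma d_sX (K : CochainComplex C ℤ) (x n n' m m' : ℤ) (h : n + x = n') (h' : m + x = m') :
    (K⟦x⟧).d n m ≫ (sX K x m m' h').hom = x.negOnePow • ((sX K x n n' h).hom ≫ K.d n' m') := by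
  subst h h'
  have : (x.negOnePow • K.d (n + x) (m + x)) ≫ 𝟙 _ =
    x.negOnePow • (𝟙 _ ≫ K.d (n + x) (m + x)) := by simp
  exact this

lemma map_sX {K L : CochainComplex C ℤ} (φ : K ⟶ L) (x n n' : ℤ) (h : n + x = n') :
    (φ⟦x⟧').f n ≫ (sX L x n n' h).hom = (sX K x n n' h).hom ≫ φ.f n' := by
  subst h
  have : φ.f (n + x) ≫ 𝟙 _ = 𝟙 _ ≫ φ.f (n + x) := by simp
  exact this

lemma map_sX_assoc {K L : CochainComplex C ℤ} (φ : K ⟶ L) (x n n' : ℤ) (h : n + x = n')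
    {Z : C} (k : L.X n' ⟶ Z) :
    (φ⟦x⟧').f n ≫ (sX L x n n' h).hom ≫ k = (sX K x n n' h).hom ≫ φ.f n' ≫ k := by
  rw [← assoc, map_sX, assoc]

lemma shiftZero_sX (K : CochainComplex C ℤ) (n : ℤ) :
    ((shiftFunctorZero (CochainComplex C ℤ) ℤ).hom.app K).f n = (sX K 0 n n (by simp)).hom :=
  CochainComplex.shiftFunctorZero_hom_app_f K n

lemma shiftAdd_sX (K : CochainComplex C ℤ) (a b n m k : ℤ) (h : n + b = m) (h' : m + a = k) :
    ((shiftFunctorAdd (CochainComplex C ℤ) a b).hom.app K).f n ≫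
      (sX (K⟦a⟧) b n m h).hom ≫ (sX K a m k h').hom = (sX K (a + b) n k (by lia)).hom := by
  subst h h'
  rw [CochainComplex.shiftFunctorAdd_hom_app_f]
  have : (K.XIsoOfEq (show n + (a + b) = n + b + a by lia)).hom ≫ 𝟙 _ ≫ 𝟙 _ =
    (K.XIsoOfEq (show n + (a + b) = n + b + a by lia)).hom := by simp
  exact this

end

/-- The degree `n` component of `F^C(M⟦x⟧) ≅ F^C(M)⟦x⟧`: the summand `(p, q)` is sent identically
to the summand `(p + x, q)`. -/
noncomputable def shiftXIso (M : CochainComplex A ℤ) (x n : ℤ) :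
    ((extC F).obj (M⟦x⟧)).X n ≅ (((extC F).obj M)⟦x⟧).X n where
  hom := desc F (fun p q h => (F.map (sX M x p (p + x) rfl).hom).f q ≫
    ι F M (p + x) q (n + x) (by lia)) ≫ (sX ((extC F).obj M) x n (n + x) rfl).inv
  inv := (sX ((extC F).obj M) x n (n + x) rfl).hom ≫ desc F (fun p q h =>
    (F.map (sX M x (p - x) p (by lia)).inv).f q ≫ ι F (M⟦x⟧) (p - x) q n (by lia))
  hom_inv_id := by
    rw [assoc, Iso.inv_hom_id_assoc]
    apply hom_ext
    intro p q h
    rw [ι_desc_assoc, assoc, ι_desc, comp_id, ← HomologicalComplex.comp_f_assoc, ← F.map_comp]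
    have aux (p' : ℤ) (hp : p' = p) (h₁ : p' + x = p + x) :
        (F.map ((sX M x p (p + x) rfl).hom ≫ (sX M x p' (p + x) h₁).inv)).f q ≫
          ι F (M⟦x⟧) p' q n (by lia) = ι F (M⟦x⟧) p q n h := by
      subst hp
      rw [Iso.hom_inv_id, F.map_id, HomologicalComplex.id_f, id_comp]
    exact aux _ (by lia) _
  inv_hom_id := by
    rw [assoc, Iso.hom_comp_eq_id]
    rw [← assoc, Iso.comp_inv_eq, Iso.inv_hom_id]
    apply hom_ext
    intro p q h
    rw [ι_desc_assoc, assoc, ι_desc, comp_id, ← HomologicalComplex.comp_f_assoc, ← F.map_comp]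
    have aux (p' : ℤ) (hp : p = p') (h₁ : p - x + x = p') :
        (F.map ((sX M x (p - x) p (by lia)).inv ≫ (sX M x (p - x) p' h₁).hom)).f q ≫
          ι F M p' q (n + x) (by lia) = ι F M p q (n + x) h := by
      subst hp
      rw [Iso.inv_hom_id, F.map_id, HomologicalComplex.id_f, id_comp]
    exact aux _ (by lia) _

lemma ι_shiftXIso_hom (M : CochainComplex A ℤ) (x p p' q n n' : ℤ) (h : p + q = n)
    (hp : p + x = p') (hn : n + x = n') :
    ι F (M⟦x⟧) p q n h ≫ (shiftXIso F M x n).hom ≫ (sX ((extC F).obj M) x n n' hn).hom =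
      (F.map (sX M x p p' hp).hom).f q ≫ ι F M p' q n' (by lia) := by
  subst hp hn
  simp only [shiftXIso, assoc, Iso.inv_hom_id, comp_id]
  rw [ι_desc]

lemma ι_shiftXIso_hom_assoc (M : CochainComplex A ℤ) (x p p' q n n' : ℤ) (h : p + q = n)
    (hp : p + x = p') (hn : n + x = n') {Z : B} (k : ((extC F).obj M).X n' ⟶ Z) :
    ι F (M⟦x⟧) p q n h ≫ (shiftXIso F M x n).hom ≫ (sX ((extC F).obj M) x n n' hn).hom ≫ k =
      (F.map (sX M x p p' hp).hom).f q ≫ ι F M p' q n' (by lia) ≫ k := by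
  have e := ι_shiftXIso_hom F M x p p' q n n' h hp hn
  simpa only [assoc] using congr_arg (· ≫ k) e

/-- The isomorphism `F^C(M⟦x⟧) ≅ F^C(M)⟦x⟧`. No sign is needed: both differentials have
horizontal sign `(-1)^x`, and the vertical ones agree since `(-1)^x (-1)^{p+x} = (-1)^p`. -/
noncomputable def shiftIso (M : CochainComplex A ℤ) (x : ℤ) :
    (extC F).obj (M⟦x⟧) ≅ ((extC F).obj M)⟦x⟧ :=
  HomologicalComplex.Hom.isoOfComponents (fun n => shiftXIso F M x n) (by
    rintro n _ rfl
    rw [← cancel_mono (sX ((extC F).obj M) x (n + 1) (n + 1 + x) rfl).hom]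
    apply hom_ext
    intro p q h
    rw [assoc, assoc, d_sX _ x n (n + x) (n + 1) (n + 1 + x) rfl rfl,
      ι_d_assoc F (M⟦x⟧) p q n (p + 1) (q + 1) (n + 1) h rfl rfl rfl,
      Linear.comp_units_smul, Linear.comp_units_smul,
      ι_shiftXIso_hom_assoc F M x p (p + x) q n (n + x) h rfl rfl,
      ι_d F M (p + x) q (n + x) (p + 1 + x) (q + 1) (n + 1 + x) (by lia) (by lia) rfl (by lia)]
    simp only [Preadditive.add_comp, Linear.units_smul_comp, assoc]
    rw [ι_shiftXIso_hom F M x (p + 1) (p + 1 + x) q (n + 1) (n + 1 + x) (by lia) rfl rfl,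
      ι_shiftXIso_hom F M x p (p + x) (q + 1) (n + 1) (n + 1 + x) (by lia) rfl rfl,
      ← HomologicalComplex.comp_f_assoc, ← F.map_comp,
      d_sX _ x p (p + x) (p + 1) (p + 1 + x) rfl rfl, Functor.map_units_smul,
      HomologicalComplex.units_smul_f_apply, Linear.units_smul_comp,
      Preadditive.comp_add, Linear.comp_units_smul, smul_add, smul_smul, ← Int.negOnePow_add,
      show x + (p + x) = p + (x + x) by lia, Int.negOnePow_add p (x + x), Int.negOnePow_add x x,
      Int.units_mul_self, mul_one, F.map_comp, HomologicalComplex.comp_f, assoc,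
      ← HomologicalComplex.Hom.comm_assoc])

lemma ι_shiftIso (M : CochainComplex A ℤ) (x p p' q n n' : ℤ) (h : p + q = n)
    (hp : p + x = p') (hn : n + x = n') :
    ι F (M⟦x⟧) p q n h ≫ (shiftIso F M x).hom.f n ≫ (sX ((extC F).obj M) x n n' hn).hom =
      (F.map (sX M x p p' hp).hom).f q ≫ ι F M p' q n' (by lia) :=
  ι_shiftXIso_hom F M x p p' q n n' h hp hn

lemma ι_shiftIso_assoc (M : CochainComplex A ℤ) (x p p' q n n' : ℤ) (h : p + q = n)
    (hp : p + x = p') (hn : n + x = n') {Z : B} (k : ((extC F).obj M).X n' ⟶ Z) :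
    ι F (M⟦x⟧) p q n h ≫ (shiftIso F M x).hom.f n ≫ (sX ((extC F).obj M) x n n' hn).hom ≫ k =
      (F.map (sX M x p p' hp).hom).f q ≫ ι F M p' q n' (by lia) ≫ k := by
  have e := ι_shiftIso F M x p p' q n n' h hp hn
  simpa only [assoc] using congr_arg (· ≫ k) e

lemma shiftIso_naturality {M N : CochainComplex A ℤ} (f : M ⟶ N) (x : ℤ) :
    (extC F).map (f⟦x⟧') ≫ (shiftIso F N x).hom =
      (shiftIso F M x).hom ≫ ((extC F).map f)⟦x⟧' := by
  ext n
  rw [HomologicalComplex.comp_f, HomologicalComplex.comp_f,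
    ← cancel_mono (sX ((extC F).obj N) x n (n + x) rfl).hom]
  apply hom_ext
  intro p q h
  rw [assoc, assoc, ι_map_assoc, ι_shiftIso F N x p (p + x) q n (n + x) h rfl rfl, map_sX,
    ι_shiftIso_assoc F M x p (p + x) q n (n + x) h rfl rfl, ι_map,
    ← HomologicalComplex.comp_f_assoc, ← HomologicalComplex.comp_f_assoc, ← F.map_comp,
    ← F.map_comp, map_sX]

lemma shiftIso_zero (M : CochainComplex A ℤ) :
    (shiftIso F M 0).hom ≫ (shiftFunctorZero (CochainComplex B ℤ) ℤ).hom.app ((extC F).obj M) =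
      (extC F).map ((shiftFunctorZero (CochainComplex A ℤ) ℤ).hom.app M) := by
  ext n
  apply hom_ext
  intro p q h
  rw [HomologicalComplex.comp_f, shiftZero_sX]
  refine (ι_shiftIso F M 0 p p q n n h (by simp) (by simp)).trans ?_
  rw [← shiftZero_sX]
  exact (ι_map _ _ _ _ _ _).symm

lemma shiftIso_add (M : CochainComplex A ℤ) (a b : ℤ) :
    (shiftIso F M (a + b)).hom ≫
        (shiftFunctorAdd (CochainComplex B ℤ) a b).hom.app ((extC F).obj M) =
      (extC F).map ((shiftFunctorAdd (CochainComplex A ℤ) a b).hom.app M) ≫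
        (shiftIso F (M⟦a⟧) b).hom ≫ (shiftIso F M a).hom⟦b⟧' := by
  ext n
  change _ = ((extC F).map ((shiftFunctorAdd (CochainComplex A ℤ) a b).hom.app M)).f n ≫
    (shiftIso F (M⟦a⟧) b).hom.f n ≫ ((shiftIso F M a).hom⟦b⟧').f n
  rw [HomologicalComplex.comp_f,
    ← cancel_mono (sX (((extC F).obj M)⟦a⟧) b n (n + b) rfl).hom,
    ← cancel_mono (sX ((extC F).obj M) a (n + b) (n + b + a) rfl).hom]
  apply hom_ext
  intro p q h
  simp only [assoc]
  rw [map_sX_assoc]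
  refine (congr_arg (fun t => ι F (M⟦a + b⟧) p q n h ≫ (shiftIso F M (a + b)).hom.f n ≫ t)
    (shiftAdd_sX ((extC F).obj M) a b n (n + b) (n + b + a) rfl rfl)).trans ?_
  rw [ι_shiftIso F M (a + b) p (p + b + a) q n (n + b + a) h (by lia) (by lia)]
  refine Eq.symm ((ι_map_assoc F ((shiftFunctorAdd (CochainComplex A ℤ) a b).hom.app M)
    p q n h _).trans ?_)
  refine (congr_arg _ (ι_shiftIso_assoc F (M⟦a⟧) b p (p + b) q n (n + b) h rfl rfl _)).trans ?_
  rw [ι_shiftIso F M a (p + b) (p + b + a) q (n + b) (n + b + a) (by lia) rfl rfl,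
    ← shiftAdd_sX M a b p (p + b) (p + b + a) rfl rfl]
  simp only [Functor.map_comp, HomologicalComplex.comp_f, assoc]

noncomputable instance : (extC F).CommShift ℤ where
  commShiftIso x := NatIso.ofComponents (fun M => shiftIso F M x)
    (fun f => shiftIso_naturality F f x)
  commShiftIso_zero := by
    ext1
    apply NatTrans.ext
    funext M
    rw [Functor.CommShift.isoZero_hom_app, ← shiftIso_zero, assoc, Iso.hom_inv_id_app]
    exact (comp_id _).symm
  commShiftIso_add a b := by
    ext1
    apply NatTrans.ext
    funext M
    rw [Functor.CommShift.isoAdd_hom_app]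
    rw [← cancel_mono ((shiftFunctorAdd (CochainComplex B ℤ) a b).hom.app ((extC F).obj M))]
    simp only [assoc]
    rw [Iso.inv_hom_id_app]
    refine (shiftIso_add F M a b).trans ?_
    refine congr_arg _ (congr_arg _ (comp_id _).symm)

lemma commShiftIso_hom_app (M : CochainComplex A ℤ) (x : ℤ) :
    ((extC F).commShiftIso x).hom.app M = (shiftIso F M x).hom := rfl

/-! ### Degreewise split triangles -/

instance : (extC F).Additive where
  map_add {M N f g} := by
    ext n
    rw [HomologicalComplex.add_f_apply]
    apply hom_ext
    intro p q h
    rw [Preadditive.comp_add, ι_map, ι_map, ι_map, HomologicalComplex.add_f_apply, F.map_add,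
      HomologicalComplex.add_f_apply, Preadditive.add_comp]

section

variable (S : ShortComplex (CochainComplex A ℤ))
  (σ : ∀ n, (S.map (HomologicalComplex.eval A (ComplexShape.up ℤ) n)).Splitting)

/-- The degree `p` retraction of a degreewise splitting, as a morphism `S.X₂.X p ⟶ S.X₁.X p`. -/
def splitR (p : ℤ) : S.X₂.X p ⟶ S.X₁.X p := (σ p).r

/-- The degree `p` section of a degreewise splitting, as a morphism `S.X₃.X p ⟶ S.X₂.X p`. -/
def splitS (p : ℤ) : S.X₃.X p ⟶ S.X₂.X p := (σ p).s

lemma f_splitR (p : ℤ) : S.f.f p ≫ splitR S σ p = 𝟙 _ := (σ p).f_r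

lemma splitS_g (p : ℤ) : splitS S σ p ≫ S.g.f p = 𝟙 _ := (σ p).s_g

lemma splitS_splitR (p : ℤ) : splitS S σ p ≫ splitR S σ p = 0 := (σ p).s_r

lemma split_id (p : ℤ) : splitR S σ p ≫ S.f.f p + S.g.f p ≫ splitS S σ p = 𝟙 _ := (σ p).id

/-- A degreewise splitting of `S` induces one of `F^C(S)`, since splittings are preserved by the
additive functors `M ↦ ⊕ F(M^p)^{n-p}` on graded objects. -/
noncomputable def splitting (n : ℤ) :
    ((S.map (extC F)).map (HomologicalComplex.eval B (ComplexShape.up ℤ) n)).Splitting where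
  r := gr F (splitR S σ) n
  s := gr F (splitS S σ) n
  f_r := show ((extC F).map S.f).f n ≫ gr F (splitR S σ) n = 𝟙 _ by
    rw [map_f_eq_gr, gr_comp, ← gr_id]
    exact congr_arg (fun s => gr F s n) (funext (f_splitR S σ))
  s_g := show gr F (splitS S σ) n ≫ ((extC F).map S.g).f n = 𝟙 _ by
    rw [map_f_eq_gr, gr_comp, ← gr_id]
    exact congr_arg (fun s => gr F s n) (funext (splitS_g S σ))
  id := show gr F (splitR S σ) n ≫ ((extC F).map S.f).f n +
      ((extC F).map S.g).f n ≫ gr F (splitS S σ) n = 𝟙 _ by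
    rw [map_f_eq_gr, map_f_eq_gr, gr_comp, gr_comp, gr_add, ← gr_id]
    exact congr_arg (fun s => gr F s n) (funext (split_id S σ))

/-- The connecting morphism of a degreewise split sequence is `s ≫ d ≫ r` in each degree. -/
lemma hom_sX {C : Type*} [Category C] [Preadditive C] (S : ShortComplex (CochainComplex C ℤ))
    (σ : ∀ n, (S.map (HomologicalComplex.eval C (ComplexShape.up ℤ) n)).Splitting) (n : ℤ) :
    (CochainComplex.homOfDegreewiseSplit S σ).f n ≫ (sX S.X₁ 1 n (n + 1) rfl).hom =
      splitS S σ n ≫ S.X₂.d n (n + 1) ≫ splitR S σ (n + 1) := by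
  rw [CochainComplex.homOfDegreewiseSplit_f]
  exact comp_id _

/-- `F^C` sends the connecting morphism of `S` to that of `F^C(S)`: the vertical part of the
differential contributes `F(s) ≫ F(r) = 0`. -/
lemma map_homOfDegreewiseSplit :
    (extC F).map (CochainComplex.homOfDegreewiseSplit S σ) ≫ (shiftIso F S.X₁ 1).hom =
      CochainComplex.homOfDegreewiseSplit (S.map (extC F)) (splitting F S σ) := by
  ext n
  rw [HomologicalComplex.comp_f, ← cancel_mono (sX ((extC F).obj S.X₁) 1 n (n + 1) rfl).hom]
  apply hom_ext
  intro p q h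
  rw [assoc, ι_map_assoc, ι_shiftIso F S.X₁ 1 p (p + 1) q n (n + 1) h rfl rfl,
    ← HomologicalComplex.comp_f_assoc, ← F.map_comp, hom_sX]
  refine Eq.trans ?_ (congr_arg (fun t => ι F S.X₃ p q n h ≫ t)
    (hom_sX (S.map (extC F)) (splitting F S σ) n)).symm
  change _ = ι F S.X₃ p q n h ≫ gr F (splitS S σ) n ≫
    ((extC F).obj S.X₂).d n (n + 1) ≫ gr F (splitR S σ) (n + 1)
  rw [ι_gr_assoc, ι_d_assoc F S.X₂ p q n (p + 1) (q + 1) (n + 1) h rfl rfl rfl]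
  simp only [Preadditive.add_comp, Preadditive.comp_add, Linear.units_smul_comp,
    Linear.comp_units_smul, assoc]
  rw [ι_gr F _ (p + 1) q (n + 1), ι_gr F _ p (q + 1) (n + 1),
    ← HomologicalComplex.Hom.comm_assoc,
    ← HomologicalComplex.comp_f_assoc (F.map (splitS S σ p)) (F.map (splitR S σ p)),
    ← F.map_comp (splitS S σ p) (splitR S σ p), splitS_splitR]
  simp

/-- `F^C` maps the triangle of a degreewise split sequence to the triangle of its image. -/
noncomputable def mapTriangleIso :
    (extC F).mapTriangle.obj (CochainComplex.triangleOfDegreewiseSplit S σ) ≅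
      CochainComplex.triangleOfDegreewiseSplit (S.map (extC F)) (splitting F S σ) :=
  Pretriangulated.Triangle.isoMk _ _ (Iso.refl _) (Iso.refl _) (Iso.refl _)
    ((comp_id _).trans (id_comp _).symm) ((comp_id _).trans (id_comp _).symm)
    (by
      refine (congr_arg _ (CategoryTheory.Functor.map_id _ _)).trans ((comp_id _).trans ?_)
      exact (map_homOfDegreewiseSplit F S σ).trans (id_comp _).symm)

end

/-! ### Descent to the homotopy categories -/

/-- The functor `F^K : K(A) ⥤ K(B)` induced by `F^C`. -/
noncomputable def extK :
    HomotopyCategory A (ComplexShape.up ℤ) ⥤ HomotopyCategory B (ComplexShape.up ℤ) :=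
  CategoryTheory.Quotient.lift _ (extC F ⋙ HomotopyCategory.quotient B _)
    (fun _ _ _ _ ⟨h⟩ => HomotopyCategory.eq_of_homotopy _ _ (mapHomotopy F h))

/-- The comparison isomorphism `Q_A ⋙ F^K ≅ F^C ⋙ Q_B`, compatible with the shifts. -/
noncomputable def extKFactors : HomotopyCategory.quotient A (ComplexShape.up ℤ) ⋙ extK F ≅
    extC F ⋙ HomotopyCategory.quotient B (ComplexShape.up ℤ) :=
  CategoryTheory.Quotient.lift.isLift _ _ _

noncomputable instance : (extK F).CommShift ℤ :=
  Quotient.liftCommShift _ _ _ _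

instance : NatTrans.CommShift (extKFactors F).hom ℤ :=
  Quotient.liftCommShift_compatibility _ _ _ _

instance : (extK F).IsTriangulated where
  map_distinguished T hT := by
    obtain ⟨S, σ, ⟨e⟩⟩ :=
      (HomotopyCategory.distinguished_iff_iso_trianglehOfDegreewiseSplit T).1 hT
    refine (HomotopyCategory.distinguished_iff_iso_trianglehOfDegreewiseSplit _).2
      ⟨S.map (extC F), splitting F S σ, ⟨(extK F).mapTriangle.mapIso e ≪≫
        ((Functor.mapTriangleCompIso _ _).symm ≪≫ Functor.mapTriangleIso (extKFactors F) ≪≫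
          Functor.mapTriangleCompIso _ _).app _ ≪≫
        (HomotopyCategory.quotient B (ComplexShape.up ℤ)).mapTriangle.mapIso
          (mapTriangleIso F S σ)⟩⟩

end ExtC

/-- **Theorem 4.11(2), homotopy-category part (see also Proposition 4.6).**
Let `A` be an additive category, `B` an additive category with countable coproducts, and
`F : A ⥤ C(B)` an additive functor.  Then the extended functor `F^C : C(A) ⥤ C(B)`
descends to a functor `F^K : K(A) ⥤ K(B)` between the homotopy categories, with
`F^K ∘ Q_A = Q_B ∘ F^C`, and `F^K` is triangle-exact (triangulated). -/
theorem extC_descends_to_homotopy_categories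
    (F : A ⥤ CochainComplex B ℤ) [F.Additive] :
    ∃ FK : HomotopyCategory A (ComplexShape.up ℤ) ⥤ HomotopyCategory B (ComplexShape.up ℤ),
      (HomotopyCategory.quotient A (ComplexShape.up ℤ) ⋙ FK) =
          (extC F ⋙ HomotopyCategory.quotient B (ComplexShape.up ℤ)) ∧
      ∃ _ : FK.CommShift ℤ, FK.IsTriangulated := by
  exact ⟨ExtC.extK F, CategoryTheory.Quotient.lift_spec _ _ _, inferInstance, inferInstance⟩

end ExtensionOfFunctors
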